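/- Let D be a negative integer with D ≡ 0 or 1 (mod 4), let f(x,y) = a x² + b x y + c y² be a primitive positive definite integral binary quadratic form of discriminant D, let n be a positive integer, and let p be a prime not dividing D such that f represents n p². Then n is represented by f over ℤ_q for every prime q; that is, for every prime q there exist q-adic integers x, y ∈ ℤ_q with a x² + b x y + c y² = n. -/

import Mathlib

/-- `n` is represented by the binary quadratic form `(a, b, c)` over the `q`-adic
integers `ℤ_[q]`. -/
def RepresentedOverZq (a b c n : ℤ) (q : ℕ) [Fact q.Prime] : Prop :=
  ∃ x y : ℤ_[q], (a : ℤ_[q]) * x ^ 2 + (b : ℤ_[q]) * x * y + (c : ℤ_[q]) * y ^ 2 = (n : ℤ_[q])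

/-!
Let `m` be prime to the discriminant of `f`. If `m` is a `q`-adic unit, then `f(x, y) = n m²`
rescales to `f(x / m, y / m) = n`. Otherwise `q ∣ m`, so the discriminant is a `q`-adic unit, that
is, `f` is nonsingular modulo `q`. A primitive solution of `f(x, y) = n m²` is then a nonsingular
zero of `f` modulo `q`, and by Hensel's lemma such a zero makes `f` represent every `q`-adic
integer. An imprimitive one can be divided by `q`, which replaces `m` by `m / q`.
-/

open IsLocalRing QuadraticMap

theorem henselianLocalRing_of_henselianRing {R : Type*} [CommRing R] [IsLocalRing R]
    [HenselianRing R (maximalIdeal R)] : HenselianLocalRing R where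
  is_henselian f hf a₀ h₀ h₁ :=
    HenselianRing.is_henselian f hf a₀ h₀ (h₁.map (Ideal.Quotient.mk (maximalIdeal R)))

section QuadraticForm

variable {R M : Type*} [CommRing R] [AddCommGroup M] [Module R M]

theorem mem_range_of_mul_sq_mem_range_of_isUnit (Q : QuadraticForm R M) {n m : R} (hm : IsUnit m)
    (h : n * m ^ 2 ∈ Set.range Q) : n ∈ Set.range Q := by
  obtain ⟨u, rfl⟩ := hm
  obtain ⟨v, hv⟩ := h
  refine ⟨(↑u⁻¹ : R) • v, ?_⟩
  rw [QuadraticMap.map_smul, hv, smul_eq_mul]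
  linear_combination n * (↑u * ↑u⁻¹ + 1) * u.mul_inv

variable [HenselianLocalRing R]

theorem exists_unit_sq_sub_self_add_eq_zero {ε : R} (hε : ε ∈ maximalIdeal R) :
    ∃ w : Rˣ, (w : R) ^ 2 - w + ε = 0 := by
  let F : Polynomial R := .X ^ 2 - .X + .C ε
  have hF : F.Monic := by simp only [F]; monicity!
  have hF_one : F.eval 1 ∈ maximalIdeal R := by simpa [F] using hε
  have hF'_one : F.derivative.eval 1 = 1 := by simp [F, sub_eq_iff_eq_add, one_add_one_eq_two]
  obtain ⟨w, hw, hw_sub⟩ := HenselianLocalRing.is_henselian F hF 1 hF_one (by simp [hF'_one])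
  have hw_unit : IsUnit w := by
    by_contra hw_mem
    exact (maximalIdeal R).ne_top_iff_one.1 Ideal.IsPrime.ne_top'
      ((Submodule.sub_mem_iff_right _ hw_mem).1 hw_sub)
  exact ⟨hw_unit.unit, by simpa [F] using hw⟩

theorem exists_quadratic_eq_zero_of_isUnit {α β γ : R} (hβ : IsUnit β)
    (hαγ : α * γ ∈ maximalIdeal R) : ∃ t, α * (t * t) + β * t + γ = 0 := by
  obtain ⟨u, rfl⟩ := hβ
  -- The substitution `t = -γ / (u w)` yields a monic equation for `w`, as Hensel's lemma requires.
  obtain ⟨w, hw⟩ := exists_unit_sq_sub_self_add_eq_zero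
    (Ideal.mul_mem_right ((↑u⁻¹ : R) ^ 2) _ hαγ)
  refine ⟨-γ * ↑u⁻¹ * ↑w⁻¹, ?_⟩
  linear_combination γ * (↑w⁻¹ : R) ^ 2 * hw - γ * ↑w⁻¹ * u.mul_inv +
    γ * (↑w⁻¹ - 1 - ↑w * ↑w⁻¹) * w.mul_inv

theorem surjective_of_isUnit_polar (Q : QuadraticForm R M) {v w : M}
    (hv : Q v ∈ maximalIdeal R) (hvw : IsUnit (polar Q v w)) : Function.Surjective Q := by
  intro n
  obtain ⟨t, ht⟩ := exists_quadratic_eq_zero_of_isUnit hvw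
    (Ideal.mul_mem_right (Q w - n) _ hv)
  refine ⟨t • v + w, ?_⟩
  rw [QuadraticMap.map_add Q, QuadraticMap.map_smul, polar_smul_left, smul_eq_mul, smul_eq_mul]
  linear_combination ht

end QuadraticForm

section BinaryForm

variable {R : Type*} [CommRing R] {a b c n m : R}

/-- The binary quadratic form `a x² + b x y + c y²` over `R`, as a quadratic form on `R × R`, so that
Hensel lifting and rescaling can be done for quadratic forms without coordinates. -/
def binaryForm (a b c : R) : QuadraticForm R (R × R) :=
  a • linMulLin (.fst R R R) (.fst R R R) + b • linMulLin (.fst R R R) (.snd R R R) +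
    c • linMulLin (.snd R R R) (.snd R R R)

@[simp]
theorem binaryForm_apply (a b c : R) (v : R × R) :
    binaryForm a b c v = a * v.1 ^ 2 + b * v.1 * v.2 + c * v.2 ^ 2 := by
  simp only [binaryForm, add_apply, smul_apply, linMulLin_apply, LinearMap.fst_apply,
    LinearMap.snd_apply, smul_eq_mul]
  ring

-- `(-2c, b)` and `(b, -2a)` are, up to sign, the columns of the adjugate of the Gram matrix
-- `!![2a, b; b, 2c]`, whose determinant is `-discrim a b c`.
theorem polar_binaryForm_eq_discrim_mul_fst (a b c : R) (v : R × R) :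
    polar (binaryForm a b c) v (-2 * c, b) = discrim a b c * v.1 := by
  simp only [polar, binaryForm_apply, Prod.fst_add, Prod.snd_add, discrim]
  ring

theorem polar_binaryForm_eq_discrim_mul_snd (a b c : R) (v : R × R) :
    polar (binaryForm a b c) v (b, -2 * a) = discrim a b c * v.2 := by
  simp only [polar, binaryForm_apply, Prod.fst_add, Prod.snd_add, discrim]
  ring

theorem surjective_binaryForm_of_isUnit_discrim [HenselianLocalRing R]
    (hD : IsUnit (discrim a b c)) {v : R × R} (hv : IsUnit v.1 ∨ IsUnit v.2)
    (hQv : binaryForm a b c v ∈ maximalIdeal R) : Function.Surjective (binaryForm a b c) := by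
  rcases hv with hv | hv
  · exact surjective_of_isUnit_polar _ hQv
      (polar_binaryForm_eq_discrim_mul_fst a b c v ▸ hD.mul hv)
  · exact surjective_of_isUnit_polar _ hQv
      (polar_binaryForm_eq_discrim_mul_snd a b c v ▸ hD.mul hv)

variable [HenselianLocalRing R] [IsDomain R] [IsPrincipalIdealRing R]

theorem mem_range_binaryForm_of_mul_irreducible_sq (hD : IsUnit (discrim a b c)) {π : R}
    (hπ : Irreducible π) (h : n * π ^ 2 ∈ Set.range (binaryForm a b c)) :
    n ∈ Set.range (binaryForm a b c) := by
  have hspan : Ideal.span {π} = maximalIdeal R :=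
    eq_maximalIdeal (PrincipalIdealRing.isMaximal_of_irreducible hπ)
  have dvd_of_not_isUnit {z : R} (hz : ¬IsUnit z) : π ∣ z := by
    rwa [← Ideal.mem_span_singleton, hspan]
  obtain ⟨v, hv⟩ := h
  by_cases hprim : IsUnit v.1 ∨ IsUnit v.2
  · refine surjective_binaryForm_of_isUnit_discrim hD hprim ?_ n
    rw [hv]
    exact Ideal.mul_mem_left _ _ (Ideal.pow_mem_of_mem _ hπ.not_isUnit 2 two_pos)
  · rw [not_or] at hprim
    obtain ⟨x, hx⟩ := dvd_of_not_isUnit hprim.1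
    obtain ⟨y, hy⟩ := dvd_of_not_isUnit hprim.2
    refine ⟨(x, y), mul_right_cancel₀ (pow_ne_zero 2 hπ.ne_zero) ?_⟩
    rw [← hv, binaryForm_apply, binaryForm_apply, hx, hy]
    ring

theorem mem_range_binaryForm_of_mul_sq (hD : IsUnit (discrim a b c)) (hm : m ≠ 0)
    (h : n * m ^ 2 ∈ Set.range (binaryForm a b c)) : n ∈ Set.range (binaryForm a b c) := by
  induction m using WfDvdMonoid.induction_on_irreducible generalizing n with
  | zero => exact absurd rfl hm
  | unit u hu => exact mem_range_of_mul_sq_mem_range_of_isUnit _ hu h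
  | mul m π hm₀ hπ ih =>
    rw [mul_pow, mul_left_comm, mul_comm] at h
    exact ih hm₀ (mem_range_binaryForm_of_mul_irreducible_sq hD hπ h)

theorem mem_range_binaryForm_of_isCoprime_discrim (hm : m ≠ 0) (hmD : IsCoprime m (discrim a b c))
    (h : n * m ^ 2 ∈ Set.range (binaryForm a b c)) : n ∈ Set.range (binaryForm a b c) := by
  obtain ⟨r, s, hrs⟩ := hmD
  rcases isUnit_or_isUnit_of_add_one hrs with hm_unit | hD
  · exact mem_range_of_mul_sq_mem_range_of_isUnit _ (isUnit_of_mul_isUnit_right hm_unit) h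
  · exact mem_range_binaryForm_of_mul_sq (isUnit_of_mul_isUnit_right hD) hm h

end BinaryForm

theorem representedOverZq_iff_mem_range_binaryForm {a b c n : ℤ} {q : ℕ} [Fact q.Prime] :
    RepresentedOverZq a b c n q ↔ (n : ℤ_[q]) ∈ Set.range (binaryForm (a : ℤ_[q]) b c) := by
  simp [RepresentedOverZq]

theorem rep_genus_of_rep_np_sq_general {a b c n m : ℤ} (hm : m ≠ 0)
    (hmD : IsCoprime m (discrim a b c)) (q : ℕ) [Fact q.Prime]
    (h : RepresentedOverZq a b c (n * m ^ 2) q) : RepresentedOverZq a b c n q := by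
  rw [representedOverZq_iff_mem_range_binaryForm] at h ⊢
  have : HenselianLocalRing ℤ_[q] := henselianLocalRing_of_henselianRing
  have hmD' : IsCoprime (m : ℤ_[q]) (discrim (a : ℤ_[q]) b c) := by
    simpa [discrim] using hmD.map (Int.castRingHom ℤ_[q])
  exact mem_range_binaryForm_of_isCoprime_discrim (Int.cast_ne_zero.2 hm) hmD' (by simpa using h)

/-- If a primitive positive definite integral binary quadratic form `f` of
discriminant `D < 0`, `D ≡ 0, 1 (mod 4)`, represents `n * p ^ 2` for a prime `p ∤ D`,
then `n` is represented by `f` over `ℤ_q` for every prime `q` (i.e. by the genus of `f`). -/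
theorem rep_genus_of_rep_np_sq (D : ℤ) (hDneg : D < 0) (hDmod : D % 4 = 0 ∨ D % 4 = 1)
    (a b c : ℤ) (ha : 0 < a) (hprim : Int.gcd a (Int.gcd b c) = 1)
    (hD : b ^ 2 - 4 * a * c = D)
    (n : ℤ) (hn : 0 < n) (p : ℕ) (hp : p.Prime) (hpD : ¬ (p : ℤ) ∣ D)
    (hrep : ∃ x y : ℤ, a * x ^ 2 + b * x * y + c * y ^ 2 = n * (p : ℤ) ^ 2) :
    ∀ (q : ℕ) (hq : Fact q.Prime), @RepresentedOverZq a b c n q hq := by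
  intro q hq
  obtain ⟨x, y, hxy⟩ := hrep
  have hpD' : IsCoprime (p : ℤ) (discrim a b c) :=
    (Nat.prime_iff_prime_int.1 hp).coprime_iff_not_dvd.2 (by rwa [discrim, hD])
  have hrep_q : RepresentedOverZq a b c (n * (p : ℤ) ^ 2) q := ⟨x, y, mod_cast hxy⟩
  exact rep_genus_of_rep_np_sq_general (mod_cast hp.ne_zero) hpD' q hrep_q
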